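/- The curvature map A ↦ F, where F_{μν} = ∂_μ A_ν − ∂_ν A_μ + i g (A_μ A_ν − A_ν A_μ), is a bijection from the set of smooth maps A : ℝⁿ → (Fin n → Matrix (Fin N) (Fin N) ℂ) satisfying the Fock–Schwinger gauge condition ∑_ν x^ν A_ν(x) = 0, onto the set of smooth maps F : ℝⁿ → (Fin n → Fin n → Matrix (Fin N) (Fin N) ℂ) with F_{μν} = −F_{νμ} satisfying the Bianchi identity for curvature. The inverse map is F ↦ A with A_μ(x) = ∫₀¹ t ∑_ν x^ν F_{νμ}(tx) dt. -/

import Mathlib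

/-- The partial derivative `∂_μ f` of a complex-valued function on `ℝⁿ`. -/
noncomputable def pd {n : ℕ} (μ : Fin n) (f : (Fin n → ℝ) → ℂ) (x : Fin n → ℝ) : ℂ :=
  fderiv ℝ f x (Pi.single μ 1)

/-- The curvature map `A ↦ F`, `F_{μν} = ∂_μ A_ν − ∂_ν A_μ + i g (A_μ A_ν − A_ν A_μ)`. -/
noncomputable def curvMap {n N : ℕ} (g : ℝ)
    (A : (Fin n → ℝ) → Fin n → Matrix (Fin N) (Fin N) ℂ) :
    (Fin n → ℝ) → Fin n → Fin n → Matrix (Fin N) (Fin N) ℂ :=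
  fun x μ ν => Matrix.of fun a b =>
    pd μ (fun y => A y ν a b) x - pd ν (fun y => A y μ a b) x
      + Complex.I * (g : ℂ) * ((A x μ * A x ν) a b - (A x ν * A x μ) a b)

/-- The radial integral map `F ↦ A`, `A_μ(x) = ∫₀¹ t ∑_ν x^ν F_{νμ}(tx) dt`. -/
noncomputable def radConn {n N : ℕ}
    (F : (Fin n → ℝ) → Fin n → Fin n → Matrix (Fin N) (Fin N) ℂ) :
    (Fin n → ℝ) → Fin n → Matrix (Fin N) (Fin N) ℂ :=
  fun x μ => Matrix.of fun a b =>
    ∫ t in (0:ℝ)..1, t • ∑ ν, (x ν : ℂ) * F (t • x) ν μ a b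

/-- The set of smooth connections in the Fock–Schwinger gauge `∑_ν x^ν A_ν(x) = 0`. -/
def FockSchwingerSet (n N : ℕ) :
    Set ((Fin n → ℝ) → Fin n → Matrix (Fin N) (Fin N) ℂ) :=
  {A | (∀ μ a b, ContDiff ℝ (⊤ : ℕ∞) fun x => A x μ a b) ∧
    ∀ (x : Fin n → ℝ) a b, ∑ ν, (x ν : ℂ) * A x ν a b = 0}

/-- The set of smooth antisymmetric field strengths satisfying the Bianchi identity for
curvature, in which `A` is defined from `F` by the radial integral formula. -/
def BianchiSet (n N : ℕ) (g : ℝ) :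
    Set ((Fin n → ℝ) → Fin n → Fin n → Matrix (Fin N) (Fin N) ℂ) :=
  {F | (∀ μ ν a b, ContDiff ℝ (⊤ : ℕ∞) fun x => F x μ ν a b) ∧
    (∀ (x : Fin n → ℝ) μ ν, F x μ ν = - F x ν μ) ∧
    ∀ (x : Fin n → ℝ) μ ν ρ a b,
      pd μ (fun y => F y ν ρ a b) x + pd ν (fun y => F y ρ μ a b) x
        + pd ρ (fun y => F y μ ν a b) x
        + Complex.I * (g : ℂ) *
          ((radConn F x μ * F x ν ρ - F x ν ρ * radConn F x μ) a b
            + (radConn F x ν * F x ρ μ - F x ρ μ * radConn F x ν) a b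
            + (radConn F x ρ * F x μ ν - F x μ ν * radConn F x ρ) a b) = 0}

open scoped ContDiff

lemma fs_hasFDerivAt_integral {n : ℕ} {V : Type} [NormedAddCommGroup V] [NormedSpace ℝ V]
    (H : (Fin n → ℝ) × ℝ → V) (hH : ContDiff ℝ 1 H) (x₀ : Fin n → ℝ) :
    HasFDerivAt (fun x => ∫ t in (0:ℝ)..1, H (x, t))
      (∫ t in (0:ℝ)..1, (fderiv ℝ H (x₀, t)).comp
        (ContinuousLinearMap.inl ℝ (Fin n → ℝ) ℝ)) x₀ := by
  have hc : Continuous H := hH.continuous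
  have hc' : Continuous (fun p => (fderiv ℝ H p).comp
        (ContinuousLinearMap.inl ℝ (Fin n → ℝ) ℝ)) := by
    have := hH.continuous_fderiv (by simp)
    fun_prop
  have hK : IsCompact (Metric.closedBall x₀ 1 ×ˢ Set.Icc (0:ℝ) 1) :=
    (isCompact_closedBall x₀ 1).prod isCompact_Icc
  obtain ⟨C, hC⟩ := hK.exists_bound_of_continuousOn hc'.continuousOn
  refine intervalIntegral.hasFDerivAt_integral_of_dominated_of_fderiv_le
    (s := Metric.closedBall x₀ 1) (bound := fun _ => C)
    (F' := fun x t => (fderiv ℝ H (x, t)).comp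
        (ContinuousLinearMap.inl ℝ (Fin n → ℝ) ℝ))
    (Metric.closedBall_mem_nhds _ one_pos) ?_ ?_ ?_ ?_ ?_ ?_
  · exact Filter.Eventually.of_forall fun x =>
      (hc.comp (by fun_prop : Continuous fun t : ℝ => (x, t))).aestronglyMeasurable
  · exact (hc.comp (by fun_prop : Continuous fun t : ℝ => (x₀, t))).intervalIntegrable _ _
  · exact (hc'.comp (by fun_prop : Continuous fun t : ℝ => (x₀, t))).aestronglyMeasurable
  · refine Filter.Eventually.of_forall fun t ht x hx => hC (x, t) ⟨hx, ?_⟩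
    rw [Set.uIoc_of_le zero_le_one] at ht
    exact ⟨ht.1.le, ht.2⟩
  · exact intervalIntegrable_const
  · refine Filter.Eventually.of_forall fun t ht x hx => ?_
    have h1 : HasFDerivAt H (fderiv ℝ H (x, t)) (x, t) :=
      ((hH.differentiable (by simp)) (x, t)).hasFDerivAt
    exact h1.comp x (hasFDerivAt_prodMk_left x t)

lemma fs_contDiff_integral_nat {n : ℕ} (m : ℕ) :
    ∀ {V : Type} [NormedAddCommGroup V] [NormedSpace ℝ V]
    (H : (Fin n → ℝ) × ℝ → V) (_ : ContDiff ℝ ∞ H),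
    ContDiff ℝ m (fun x => ∫ t in (0:ℝ)..1, H (x, t)) := by
  induction m with
  | zero =>
    intro V _ _ H hH
    have h1 : Differentiable ℝ (fun x => ∫ t in (0:ℝ)..1, H (x, t)) := fun x =>
      (fs_hasFDerivAt_integral H (hH.of_le (by exact_mod_cast le_top)) x).differentiableAt
    exact contDiff_zero.2 h1.continuous
  | succ m ih =>
    intro V _ _ H hH
    have h0 := fun x => fs_hasFDerivAt_integral H (hH.of_le (by exact_mod_cast le_top)) x
    have : ((m + 1 : ℕ) : ℕ∞ω) = (m : ℕ∞ω) + 1 := by norm_cast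
    rw [this, contDiff_succ_iff_fderiv]
    refine ⟨fun x => (h0 x).differentiableAt, by simp, ?_⟩
    have e : fderiv ℝ (fun x => ∫ t in (0:ℝ)..1, H (x, t)) = fun x =>
        ∫ t in (0:ℝ)..1, (fderiv ℝ H (x, t)).comp
        (ContinuousLinearMap.inl ℝ (Fin n → ℝ) ℝ) := funext fun x => (h0 x).fderiv
    rw [e]
    refine ih (fun p => (fderiv ℝ H p).comp (ContinuousLinearMap.inl ℝ (Fin n → ℝ) ℝ)) ?_
    have : ContDiff ℝ ∞ (fderiv ℝ H) := hH.fderiv_right (by simp)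
    exact this.clm_comp contDiff_const

lemma fs_contDiff_integral {n : ℕ} {V : Type} [NormedAddCommGroup V] [NormedSpace ℝ V]
    (H : (Fin n → ℝ) × ℝ → V) (hH : ContDiff ℝ ∞ H) :
    ContDiff ℝ ∞ (fun x => ∫ t in (0:ℝ)..1, H (x, t)) :=
  contDiff_infty.2 fun m => fs_contDiff_integral_nat m H hH

section scalar
variable {n : ℕ}

lemma pd_smooth (μ : Fin n) {f : (Fin n → ℝ) → ℂ} (hf : ContDiff ℝ ∞ f) :
    ContDiff ℝ ∞ (pd μ f) := by
  have : ContDiff ℝ ∞ (fderiv ℝ f) := hf.fderiv_right (by simp)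
  exact this.clm_apply contDiff_const

lemma fs_diffAt {f : (Fin n → ℝ) → ℂ} (hf : ContDiff ℝ ∞ f) (x) : DifferentiableAt ℝ f x :=
  hf.differentiable (by simp) x

lemma pd_comm (μ ν : Fin n) {f : (Fin n → ℝ) → ℂ} (hf : ContDiff ℝ ∞ f) (x) :
    pd μ (pd ν f) x = pd ν (pd μ f) x := by
  have h1 : DifferentiableAt ℝ (fderiv ℝ f) x :=
    (hf.fderiv_right (m := ∞) (by simp)).differentiable (by simp) x
  have key : ∀ a b : Fin n, pd a (pd b f) x
      = fderiv ℝ (fderiv ℝ f) x (Pi.single a 1) (Pi.single b 1) := by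
    intro a b
    have : pd b f = fun y => fderiv ℝ f y (Pi.single b 1) := rfl
    rw [this]; unfold pd
    rw [fderiv_clm_apply h1 (by fun_prop)]
    simp
  rw [key, key]
  exact (hf.contDiffAt.isSymmSndFDerivAt (by
    rw [minSmoothness_of_isRCLikeNormedField]
    exact WithTop.coe_le_coe.2 (le_top : (2 : ℕ∞) ≤ ⊤))) _ _

lemma pd_add (μ : Fin n) {f h : (Fin n → ℝ) → ℂ} (hf : ContDiff ℝ ∞ f) (hh : ContDiff ℝ ∞ h) (x) :
    pd μ (fun y => f y + h y) x = pd μ f x + pd μ h x := by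
  unfold pd
  rw [fderiv_fun_add (fs_diffAt hf x) (fs_diffAt hh x)]; simp

lemma pd_sub (μ : Fin n) {f h : (Fin n → ℝ) → ℂ} (hf : ContDiff ℝ ∞ f) (hh : ContDiff ℝ ∞ h) (x) :
    pd μ (fun y => f y - h y) x = pd μ f x - pd μ h x := by
  unfold pd
  rw [fderiv_fun_sub (fs_diffAt hf x) (fs_diffAt hh x)]; simp

lemma pd_mul (μ : Fin n) {f h : (Fin n → ℝ) → ℂ} (hf : ContDiff ℝ ∞ f) (hh : ContDiff ℝ ∞ h) (x) :
    pd μ (fun y => f y * h y) x = pd μ f x * h x + f x * pd μ h x := by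
  unfold pd
  rw [fderiv_fun_mul (fs_diffAt hf x) (fs_diffAt hh x)]; simp; ring

lemma pd_const (μ : Fin n) (c : ℂ) (x) : pd μ (fun _ => c) x = 0 := by
  unfold pd; simp

lemma pd_sum {ι : Type*} (s : Finset ι) (μ : Fin n) {f : ι → (Fin n → ℝ) → ℂ}
    (hf : ∀ i, ContDiff ℝ ∞ (f i)) (x) :
    pd μ (fun y => ∑ i ∈ s, f i y) x = ∑ i ∈ s, pd μ (f i) x := by
  unfold pd
  rw [fderiv_fun_sum fun i _ => fs_diffAt (hf i) x]; simp

lemma coord_smooth (ν : Fin n) : ContDiff ℝ ∞ (fun y : Fin n → ℝ => (y ν : ℂ)) :=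
  Complex.ofRealCLM.contDiff.comp (contDiff_apply ℝ ℝ ν)

lemma pd_coord (μ ν : Fin n) (x) :
    pd μ (fun y : Fin n → ℝ => (y ν : ℂ)) x = if ν = μ then 1 else 0 := by
  unfold pd
  have : HasFDerivAt (fun y : Fin n → ℝ => (y ν : ℂ))
      (Complex.ofRealCLM.comp (ContinuousLinearMap.proj ν)) x :=
    (Complex.ofRealCLM.comp (ContinuousLinearMap.proj (R := ℝ) (φ := fun _ : Fin n => ℝ) ν)).hasFDerivAt
  rw [this.fderiv]
  simp only [ContinuousLinearMap.comp_apply, ContinuousLinearMap.proj_apply, Pi.single_apply]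
  split_ifs <;> simp

/-- derivative along rays -/
lemma ray_hasDerivAt {f : (Fin n → ℝ) → ℂ} (hf : ContDiff ℝ ∞ f) (x : Fin n → ℝ) (t : ℝ) :
    HasDerivAt (fun s : ℝ => f (s • x)) (∑ ν, (x ν : ℂ) * pd ν f (t • x)) t := by
  have h1 := (fs_diffAt hf (t • x)).hasFDerivAt
  have h2 : HasDerivAt (fun s : ℝ => s • x) x t := by
    simpa using (hasDerivAt_id t).smul_const x
  have h3 := h1.comp_hasDerivAt t h2
  have e : fderiv ℝ f (t • x) x = ∑ ν, (x ν : ℂ) * pd ν f (t • x) := by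
    conv_lhs => rw [pi_eq_sum_univ' x]
    rw [map_sum]
    refine Finset.sum_congr rfl fun ν _ => ?_
    rw [map_smul]; unfold pd
    rw [Complex.real_smul]
    congr 3
    ext j; simp [Pi.single_apply]
  rw [← e]; exact h3

/-- ∂_μ of a vanishing contraction with the position vector -/
lemma pd_contract (μ : Fin n) {f : Fin n → (Fin n → ℝ) → ℂ} (hf : ∀ i, ContDiff ℝ ∞ (f i))
    (h0 : ∀ x : Fin n → ℝ, ∑ ν, (x ν : ℂ) * f ν x = 0) (x) :
    ∑ ν, (x ν : ℂ) * pd μ (f ν) x = - f μ x := by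
  have h1 : pd μ (fun y : Fin n → ℝ => ∑ ν, (y ν : ℂ) * f ν y) x = 0 := by
    simp_rw [h0]; exact pd_const _ _ _
  rw [pd_sum _ _ (fun i => (coord_smooth i).mul (hf i))] at h1
  simp_rw [pd_mul μ (coord_smooth _) (hf _), pd_coord, Finset.sum_add_distrib] at h1
  simp at h1
  linear_combination h1

end scalar
section matrices
variable {n N : ℕ}

/-- entrywise smoothness -/
def FSSm (f : (Fin n → ℝ) → Matrix (Fin N) (Fin N) ℂ) : Prop :=
  ∀ a b, ContDiff ℝ ∞ fun x => f x a b

/-- entrywise partial derivative -/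
noncomputable def dM (μ : Fin n) (f : (Fin n → ℝ) → Matrix (Fin N) (Fin N) ℂ)
    (x : Fin n → ℝ) : Matrix (Fin N) (Fin N) ℂ :=
  Matrix.of fun a b => pd μ (fun y => f y a b) x

lemma FSSm.dM {f : (Fin n → ℝ) → Matrix (Fin N) (Fin N) ℂ} (hf : FSSm f) (μ : Fin n) :
    FSSm (dM μ f) := fun a b => pd_smooth μ (hf a b)

lemma FSSm.add {f h : (Fin n → ℝ) → Matrix (Fin N) (Fin N) ℂ} (hf : FSSm f) (hh : FSSm h) :
    FSSm (fun x => f x + h x) := fun a b => (hf a b).add (hh a b)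

lemma FSSm.sub {f h : (Fin n → ℝ) → Matrix (Fin N) (Fin N) ℂ} (hf : FSSm f) (hh : FSSm h) :
    FSSm (fun x => f x - h x) := fun a b => (hf a b).sub (hh a b)

lemma FSSm.smul {f : (Fin n → ℝ) → Matrix (Fin N) (Fin N) ℂ} (hf : FSSm f) (c : ℂ) :
    FSSm (fun x => c • f x) := fun a b => contDiff_const.mul (hf a b)

lemma FSSm.mul {f h : (Fin n → ℝ) → Matrix (Fin N) (Fin N) ℂ} (hf : FSSm f) (hh : FSSm h) :
    FSSm (fun x => f x * h x) := fun a b => by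
  simp only [Matrix.mul_apply]
  exact ContDiff.sum fun i _ => (hf a i).mul (hh i b)

lemma dM_add (μ : Fin n) {f h : (Fin n → ℝ) → Matrix (Fin N) (Fin N) ℂ}
    (hf : FSSm f) (hh : FSSm h) (x) : dM μ (fun y => f y + h y) x = dM μ f x + dM μ h x := by
  ext a b; exact pd_add μ (hf a b) (hh a b) x

lemma dM_sub (μ : Fin n) {f h : (Fin n → ℝ) → Matrix (Fin N) (Fin N) ℂ}
    (hf : FSSm f) (hh : FSSm h) (x) : dM μ (fun y => f y - h y) x = dM μ f x - dM μ h x := by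
  ext a b; exact pd_sub μ (hf a b) (hh a b) x

lemma dM_smul (μ : Fin n) {f : (Fin n → ℝ) → Matrix (Fin N) (Fin N) ℂ}
    (hf : FSSm f) (c : ℂ) (x) : dM μ (fun y => c • f y) x = c • dM μ f x := by
  ext a b
  have := pd_mul μ (contDiff_const (c := c)) (hf a b) x
  rw [pd_const, zero_mul, zero_add] at this
  exact this

lemma dM_mul (μ : Fin n) {f h : (Fin n → ℝ) → Matrix (Fin N) (Fin N) ℂ}
    (hf : FSSm f) (hh : FSSm h) (x) :
    dM μ (fun y => f y * h y) x = dM μ f x * h x + f x * dM μ h x := by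
  ext a b
  simp only [dM, Matrix.of_apply, Matrix.mul_apply, Matrix.add_apply]
  rw [pd_sum _ _ (fun i => (hf a i).mul (hh i b)), ← Finset.sum_add_distrib]
  exact Finset.sum_congr rfl fun i _ => pd_mul μ (hf a i) (hh i b) x

lemma dM_comm (μ ν : Fin n) {f : (Fin n → ℝ) → Matrix (Fin N) (Fin N) ℂ}
    (hf : FSSm f) (x) : dM μ (dM ν f) x = dM ν (dM μ f) x := by
  ext a b; exact pd_comm μ ν (hf a b) x

lemma curvMap_eq (g : ℝ) (A : (Fin n → ℝ) → Fin n → Matrix (Fin N) (Fin N) ℂ) (μ ν : Fin n) :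
    (fun x => curvMap g A x μ ν) = fun x =>
      (dM μ (fun y => A y ν) x - dM ν (fun y => A y μ) x)
        + (Complex.I * (g : ℂ)) • (A x μ * A x ν - A x ν * A x μ) := by
  funext x; ext a b
  simp [curvMap, dM]

lemma curvMap_smooth (g : ℝ) {A : (Fin n → ℝ) → Fin n → Matrix (Fin N) (Fin N) ℂ}
    (hA : ∀ μ, FSSm fun x => A x μ) (μ ν : Fin n) : FSSm fun x => curvMap g A x μ ν := by
  rw [curvMap_eq]
  exact (((hA ν).dM μ).sub ((hA μ).dM ν)).add
    ((((hA μ).mul (hA ν)).sub ((hA ν).mul (hA μ))).smul _)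

lemma curvMap_antisymm (g : ℝ) (A : (Fin n → ℝ) → Fin n → Matrix (Fin N) (Fin N) ℂ)
    (x) (μ ν : Fin n) : curvMap g A x μ ν = - curvMap g A x ν μ := by
  ext a b; simp [curvMap]; ring

/-- the Bianchi expression -/
noncomputable def bianchiExpr (g : ℝ) (A : (Fin n → ℝ) → Fin n → Matrix (Fin N) (Fin N) ℂ)
    (F : (Fin n → ℝ) → Fin n → Fin n → Matrix (Fin N) (Fin N) ℂ) (x : Fin n → ℝ)
    (μ ν ρ : Fin n) : Matrix (Fin N) (Fin N) ℂ :=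
  dM μ (fun y => F y ν ρ) x + dM ν (fun y => F y ρ μ) x + dM ρ (fun y => F y μ ν) x
    + (Complex.I * (g : ℂ)) • ((A x μ * F x ν ρ - F x ν ρ * A x μ)
      + (A x ν * F x ρ μ - F x ρ μ * A x ν) + (A x ρ * F x μ ν - F x μ ν * A x ρ))

lemma dM_curvMap (g : ℝ) {A : (Fin n → ℝ) → Fin n → Matrix (Fin N) (Fin N) ℂ}
    (hA : ∀ μ, FSSm fun x => A x μ) (x) (ρ μ ν : Fin n) :
    dM ρ (fun y => curvMap g A y μ ν) x =
      dM ρ (dM μ (fun y => A y ν)) x - dM ρ (dM ν (fun y => A y μ)) x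
      + (Complex.I * (g : ℂ)) • (
        (dM ρ (fun y => A y μ) x * A x ν + A x μ * dM ρ (fun y => A y ν) x)
        - (dM ρ (fun y => A y ν) x * A x μ + A x ν * dM ρ (fun y => A y μ) x)) := by
  rw [curvMap_eq, dM_add _ (((hA ν).dM μ).sub ((hA μ).dM ν))
    ((((hA μ).mul (hA ν)).sub ((hA ν).mul (hA μ))).smul _),
    dM_sub _ ((hA ν).dM μ) ((hA μ).dM ν),
    dM_smul _ (((hA μ).mul (hA ν)).sub ((hA ν).mul (hA μ))),
    dM_sub _ ((hA μ).mul (hA ν)) ((hA ν).mul (hA μ)),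
    dM_mul _ (hA μ) (hA ν), dM_mul _ (hA ν) (hA μ)]

lemma bianchi_curvMap (g : ℝ) {A : (Fin n → ℝ) → Fin n → Matrix (Fin N) (Fin N) ℂ}
    (hA : ∀ μ, FSSm fun x => A x μ) (x) (μ ν ρ : Fin n) :
    bianchiExpr g A (curvMap g A) x μ ν ρ = 0 := by
  have e : ∀ μ ν, curvMap g A x μ ν = _ := fun μ ν => congrFun (curvMap_eq g A μ ν) x
  unfold bianchiExpr
  simp only [dM_curvMap g hA, e]
  rw [dM_comm ν μ (hA ρ), dM_comm ρ μ (hA ν), dM_comm ρ ν (hA μ)]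
  simp only [smul_add, smul_sub, mul_add, add_mul, mul_sub, sub_mul, smul_mul_assoc,
    mul_smul_comm, smul_smul, mul_assoc]
  abel

/-- contraction of the curvature with the position vector -/
lemma contract_curvMap (g : ℝ) {A : (Fin n → ℝ) → Fin n → Matrix (Fin N) (Fin N) ℂ}
    (hA : A ∈ FockSchwingerSet n N) (x) (μ : Fin n) (a b) :
    ∑ ν, (x ν : ℂ) * curvMap g A x ν μ a b
      = A x μ a b + ∑ ν, (x ν : ℂ) * pd ν (fun y => A y μ a b) x := by
  obtain ⟨hs, h0⟩ := hA
  have h0' : ∑ ν, (x ν : ℂ) • A x ν = 0 := by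
    ext a b; simpa [Matrix.sum_apply] using h0 x a b
  have h1 := pd_contract μ (f := fun ν y => A y ν a b) (fun ν => hs ν a b) (fun y => h0 y a b) x
  have h2 : ∑ ν, (x ν : ℂ) * (A x ν * A x μ) a b = 0 := by
    have : (∑ ν, (x ν : ℂ) • A x ν) * A x μ = 0 := by rw [h0', zero_mul]
    have := congrFun (congrFun this a) b
    simpa [Finset.sum_mul, Matrix.sum_apply] using this
  have h3 : ∑ ν, (x ν : ℂ) * (A x μ * A x ν) a b = 0 := by
    have : A x μ * (∑ ν, (x ν : ℂ) • A x ν) = 0 := by rw [h0', mul_zero]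
    have := congrFun (congrFun this a) b
    simpa [Finset.mul_sum, Matrix.sum_apply] using this
  have : ∀ ν, (x ν : ℂ) * curvMap g A x ν μ a b = (x ν : ℂ) * pd ν (fun y => A y μ a b) x
      - (x ν : ℂ) * pd μ (fun y => A y ν a b) x
      + Complex.I * g * ((x ν : ℂ) * (A x ν * A x μ) a b)
      - Complex.I * g * ((x ν : ℂ) * (A x μ * A x ν) a b) := by
    intro ν; simp only [curvMap, Matrix.of_apply]; ring
  simp_rw [this, Finset.sum_sub_distrib, Finset.sum_add_distrib, Finset.sum_sub_distrib,
    ← Finset.mul_sum]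
  rw [h1, h2, h3]; ring

lemma radConn_curvMap (g : ℝ) {A : (Fin n → ℝ) → Fin n → Matrix (Fin N) (Fin N) ℂ}
    (hA : A ∈ FockSchwingerSet n N) : radConn (curvMap g A) = A := by
  funext x μ; ext a b
  simp only [radConn, Matrix.of_apply]
  have hsm := hA.1 μ a b
  have hF := curvMap_smooth g (A := A) (fun μ a b => hA.1 μ a b)
  have hd : ∀ t : ℝ, HasDerivAt (fun s : ℝ => (s : ℂ) * A (s • x) μ a b)
      (t • ∑ ν, (x ν : ℂ) * curvMap g A (t • x) ν μ a b) t := by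
    intro t
    have h1 := (Complex.ofRealCLM.hasDerivAt (x := t)).mul (ray_hasDerivAt hsm x t)
    have h2 := contract_curvMap g hA (t • x) μ a b
    refine h1.congr_deriv ?_
    simp only [Pi.smul_apply, smul_eq_mul, Complex.ofReal_mul, mul_assoc, ← Finset.mul_sum] at h2
    rw [Complex.real_smul, h2]
    simp
  rw [intervalIntegral.integral_eq_sub_of_hasDerivAt (fun t _ => hd t)]
  · simp
  · apply Continuous.intervalIntegrable
    have : ∀ ν, Continuous fun t : ℝ => curvMap g A (t • x) ν μ a b := fun ν =>
      (hF ν μ a b).continuous.comp (by fun_prop)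
    fun_prop

lemma radConn_mem {F : (Fin n → ℝ) → Fin n → Fin n → Matrix (Fin N) (Fin N) ℂ}
    (hF : ∀ μ ν, FSSm fun x => F x μ ν) (ha : ∀ x μ ν, F x μ ν = - F x ν μ) :
    radConn F ∈ FockSchwingerSet n N := by
  constructor
  · intro μ a b
    refine fs_contDiff_integral
      (fun p : (Fin n → ℝ) × ℝ => p.2 • ∑ ν, (p.1 ν : ℂ) * F (p.2 • p.1) ν μ a b) ?_
    refine contDiff_snd.smul (ContDiff.sum fun ν _ => ?_)
    exact ((coord_smooth ν).comp contDiff_fst).mul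
      ((hF ν μ a b).comp (contDiff_snd.smul contDiff_fst))
  · intro x a b
    simp only [radConn, Matrix.of_apply]
    simp_rw [← intervalIntegral.integral_const_mul]
    rw [← intervalIntegral.integral_finsetSum]
    · refine intervalIntegral.integral_zero_ae (Filter.Eventually.of_forall fun t _ => ?_)
      have : ∑ μ, ∑ ν, (x μ : ℂ) * ((x ν : ℂ) * F (t • x) ν μ a b) = 0 := by
        have h := Finset.sum_comm (s := Finset.univ) (t := Finset.univ)
          (f := fun μ ν => (x μ : ℂ) * ((x ν : ℂ) * F (t • x) ν μ a b))
        have h' : ∑ ν, ∑ μ, (x μ : ℂ) * ((x ν : ℂ) * F (t • x) ν μ a b)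
            = - ∑ ν, ∑ μ, (x ν : ℂ) * ((x μ : ℂ) * F (t • x) μ ν a b) := by
          simp_rw [← Finset.sum_neg_distrib]
          refine Finset.sum_congr rfl fun ν _ => Finset.sum_congr rfl fun μ _ => ?_
          rw [ha (t • x) ν μ, Matrix.neg_apply]; ring
        rw [h'] at h
        exact self_eq_neg.1 h
      simp_rw [Complex.real_smul, mul_left_comm _ (t : ℂ), ← Finset.mul_sum]
      simp_rw [← Finset.mul_sum] at this
      rw [this, mul_zero]
    · intro μ _
      apply Continuous.intervalIntegrable
      have : ∀ ν, Continuous fun t : ℝ => F (t • x) ν μ a b := fun ν =>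
        (hF ν μ a b).continuous.comp (by fun_prop)
      exact continuous_const.mul
        (continuous_id.smul (continuous_finsetSum _ fun ν _ => continuous_const.mul (this ν)))

/-- radial equation for the radial integral -/
lemma radConn_radial {F : (Fin n → ℝ) → Fin n → Fin n → Matrix (Fin N) (Fin N) ℂ}
    (hF : ∀ μ ν, FSSm fun x => F x μ ν) (ha : ∀ x μ ν, F x μ ν = - F x ν μ) (x) (μ : Fin n) (a b) :
    ∑ ν, (x ν : ℂ) * F x ν μ a b
      = radConn F x μ a b + ∑ ν, (x ν : ℂ) * pd ν (fun y => radConn F y μ a b) x := by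
  have hsm := (radConn_mem hF ha).1 μ a b
  set h : ℝ → ℂ := fun t => t • ∑ ν, (x ν : ℂ) * F (t • x) ν μ a b with hh
  have hcont : Continuous h := by
    have : ∀ ν, Continuous fun t : ℝ => F (t • x) ν μ a b := fun ν =>
        (hF ν μ a b).continuous.comp (by fun_prop)
    exact continuous_id.smul (continuous_finsetSum _ fun ν _ => continuous_const.mul (this ν))
  have h1 := (Complex.ofRealCLM.hasDerivAt (x := (1:ℝ))).mul (ray_hasDerivAt hsm x 1)
  have h2 : HasDerivAt (fun s : ℝ => ∫ t in (0:ℝ)..s, h t) (h 1) 1 :=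
    intervalIntegral.integral_hasDerivAt_right (hcont.intervalIntegrable _ _)
      hcont.stronglyMeasurable.stronglyMeasurableAtFilter hcont.continuousAt
  have e : (fun s : ℝ => ∫ t in (0:ℝ)..s, h t)
      = (fun s : ℝ => Complex.ofRealCLM s) * (fun s : ℝ => radConn F (s • x) μ a b) := by
    funext s
    have := intervalIntegral.smul_integral_comp_mul_right (a := 0) (b := 1) h s
    rw [zero_mul, one_mul] at this
    rw [← this, Complex.real_smul]
    simp only [Pi.mul_apply, radConn, Matrix.of_apply, Complex.ofRealCLM_apply]
    congr 2
    funext t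
    simp only [hh, Pi.smul_apply, smul_eq_mul, Complex.ofReal_mul, mul_assoc, ← Finset.mul_sum,
      Complex.real_smul, smul_smul]
  rw [e] at h2
  have := h2.unique h1
  simpa [hh] using this

lemma curvMap_radConn (g : ℝ) {F : (Fin n → ℝ) → Fin n → Fin n → Matrix (Fin N) (Fin N) ℂ}
    (hF : ∀ μ ν, FSSm fun x => F x μ ν) (ha : ∀ x μ ν, F x μ ν = - F x ν μ)
    (hB : ∀ x μ ν ρ, bianchiExpr g (radConn F) F x μ ν ρ = 0) :
    curvMap g (radConn F) = F := by
  have hAm := radConn_mem hF ha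
  have hrad := radConn_radial hF ha
  generalize radConn F = A at *
  have hAs : ∀ μ, FSSm fun x => A x μ := fun μ a b => hAm.1 μ a b
  have hG := curvMap_smooth g hAs
  set D : (Fin n → ℝ) → Fin n → Fin n → Matrix (Fin N) (Fin N) ℂ :=
    fun x μ ν => curvMap g A x μ ν - F x μ ν with hD
  have hDs : ∀ μ ν, FSSm fun x => D x μ ν := fun μ ν => (hG μ ν).sub (hF μ ν)
  have hDa : ∀ x μ ν, D x μ ν = - D x ν μ := by
    intro x μ ν
    simp only [hD]; rw [curvMap_antisymm, ha x μ ν]; abel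
  have hDB : ∀ x μ ν ρ, bianchiExpr g A D x μ ν ρ = 0 := by
    intro x μ ν ρ
    have h1 := bianchi_curvMap g hAs x μ ν ρ
    have h2 := hB x μ ν ρ
    have : bianchiExpr g A D x μ ν ρ
        = bianchiExpr g A (curvMap g A) x μ ν ρ - bianchiExpr g A F x μ ν ρ := by
      simp only [bianchiExpr, hD, dM_sub _ (hG _ _) (hF _ _)]
      simp only [smul_add, smul_sub, mul_sub, sub_mul]
      abel
    rw [this, h1, h2, sub_zero]
  have hDc : ∀ x μ a b, ∑ ρ, (x ρ : ℂ) * D x ρ μ a b = 0 := by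
    intro x μ a b
    simp only [hD, Matrix.sub_apply, mul_sub, Finset.sum_sub_distrib]
    rw [contract_curvMap g hAm, hrad, sub_self]
  have hDc' : ∀ x μ a b, ∑ ρ, (x ρ : ℂ) * D x μ ρ a b = 0 := by
    intro x μ a b
    have := hDc x μ a b
    simp_rw [hDa x μ, Matrix.neg_apply, mul_neg, Finset.sum_neg_distrib, this, neg_zero]
  -- matrix level contractions
  have mA : ∀ x : Fin n → ℝ, ∑ ρ, (x ρ : ℂ) • A x ρ = 0 := by
    intro x; ext a b; simpa [Matrix.sum_apply] using hAm.2 x a b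
  have mD : ∀ x μ, ∑ ρ, (x ρ : ℂ) • D x ρ μ = 0 := by
    intro x μ; ext a b; simpa only [Matrix.sum_apply, Matrix.smul_apply, smul_eq_mul,
      Matrix.zero_apply] using hDc x μ a b
  have mD' : ∀ x μ, ∑ ρ, (x ρ : ℂ) • D x μ ρ = 0 := by
    intro x μ; ext a b; simpa only [Matrix.sum_apply, Matrix.smul_apply, smul_eq_mul,
      Matrix.zero_apply] using hDc' x μ a b
  have dD : ∀ (x : Fin n → ℝ) μ ν, ∑ ρ, (x ρ : ℂ) • dM μ (fun y => D y ρ ν) x = - D x μ ν := by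
    intro x μ ν; ext a b
    have := pd_contract μ (f := fun ρ y => D y ρ ν a b) (fun ρ => hDs ρ ν a b)
      (fun y => hDc y ν a b) x
    simpa only [Matrix.sum_apply, Matrix.smul_apply, smul_eq_mul,
      Matrix.neg_apply, dM, Matrix.of_apply] using this
  have dD' : ∀ (x : Fin n → ℝ) μ ν, ∑ ρ, (x ρ : ℂ) • dM μ (fun y => D y ν ρ) x = - D x ν μ := by
    intro x μ ν; ext a b
    have := pd_contract μ (f := fun ρ y => D y ν ρ a b) (fun ρ => hDs ν ρ a b)
      (fun y => hDc' y ν a b) x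
    simpa only [Matrix.sum_apply, Matrix.smul_apply, smul_eq_mul,
      Matrix.neg_apply, dM, Matrix.of_apply] using this
  have hEuler : ∀ (x : Fin n → ℝ) μ ν,
      ∑ ρ, (x ρ : ℂ) • dM ρ (fun y => D y μ ν) x = - (2 : ℂ) • D x μ ν := by
    intro x μ ν
    have h1 : ∑ ρ, (x ρ : ℂ) • bianchiExpr g A D x μ ν ρ = 0 := by simp [hDB]
    have c1 : ∀ (P : Matrix (Fin N) (Fin N) ℂ) (Q : Fin n → Matrix (Fin N) (Fin N) ℂ),
        ∑ ρ, (x ρ : ℂ) • (Complex.I * (g : ℂ)) • (P * Q ρ)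
          = (Complex.I * (g : ℂ)) • (P * ∑ ρ, (x ρ : ℂ) • Q ρ) := by
      intro P Q
      simp_rw [Finset.mul_sum, Finset.smul_sum, mul_smul_comm]
      exact Finset.sum_congr rfl fun ρ _ => smul_comm _ _ _
    have c2 : ∀ (P : Matrix (Fin N) (Fin N) ℂ) (Q : Fin n → Matrix (Fin N) (Fin N) ℂ),
        ∑ ρ, (x ρ : ℂ) • (Complex.I * (g : ℂ)) • (Q ρ * P)
          = (Complex.I * (g : ℂ)) • ((∑ ρ, (x ρ : ℂ) • Q ρ) * P) := by
      intro P Q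
      simp_rw [Finset.sum_mul, Finset.smul_sum, smul_mul_assoc]
      exact Finset.sum_congr rfl fun ρ _ => smul_comm _ _ _
    simp only [bianchiExpr, smul_add, smul_sub, Finset.sum_add_distrib,
      Finset.sum_sub_distrib] at h1
    rw [c1 (A x μ) (fun ρ => D x ν ρ), c2 (A x μ) (fun ρ => D x ν ρ),
      c1 (A x ν) (fun ρ => D x ρ μ), c2 (A x ν) (fun ρ => D x ρ μ),
      c2 (D x μ ν) (fun ρ => A x ρ), c1 (D x μ ν) (fun ρ => A x ρ),
      mA, mD, mD', dD, dD', hDa x ν μ] at h1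
    simp only [mul_zero, zero_mul, smul_zero, sub_zero, add_zero, neg_neg] at h1
    rw [neg_smul, two_smul]
    exact eq_neg_of_add_eq_zero_right h1
  funext x μ ν
  suffices h : D x μ ν = 0 from sub_eq_zero.1 h
  ext a b
  have hd : ∀ t : ℝ, HasDerivAt (fun s : ℝ => ((s : ℂ) * s) * D (s • x) μ ν a b) 0 t := by
    intro t
    have h0 := Complex.ofRealCLM.hasDerivAt (x := t)
    have h1 := (h0.mul h0).mul (ray_hasDerivAt (hDs μ ν a b) x t)
    refine h1.congr_deriv ?_
    have h2 := congrFun (congrFun (hEuler (t • x) μ ν) a) b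
    simp only [Matrix.sum_apply, Matrix.smul_apply, smul_eq_mul, Pi.smul_apply,
      Complex.ofReal_mul, mul_assoc, ← Finset.mul_sum, dM, Matrix.of_apply] at h2
    simp only [Complex.ofRealCLM_apply, Complex.ofReal_one, Pi.mul_apply]
    linear_combination (t : ℂ) * h2
  have := is_const_of_deriv_eq_zero (fun t => (hd t).differentiableAt) (fun t => (hd t).deriv) 1 0
  simpa using this

lemma bianchi_iff (g : ℝ) (A : (Fin n → ℝ) → Fin n → Matrix (Fin N) (Fin N) ℂ)
    (F : (Fin n → ℝ) → Fin n → Fin n → Matrix (Fin N) (Fin N) ℂ) (x) (μ ν ρ : Fin n) :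
    bianchiExpr g A F x μ ν ρ = 0 ↔ ∀ a b, 
      pd μ (fun y => F y ν ρ a b) x + pd ν (fun y => F y ρ μ a b) x
        + pd ρ (fun y => F y μ ν a b) x
        + Complex.I * (g : ℂ) *
          ((A x μ * F x ν ρ - F x ν ρ * A x μ) a b
            + (A x ν * F x ρ μ - F x ρ μ * A x ν) a b
            + (A x ρ * F x μ ν - F x μ ν * A x ρ) a b) = 0 :=
  ⟨fun h a b => congrFun (congrFun h a) b, fun h => by ext a b; exact h a b⟩

end matrices

/-- the curvature map is a bijection from smooth connections in the
Fock–Schwinger gauge onto smooth antisymmetric field strengths satisfying the Bianchi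
identity for curvature, with inverse given by the radial integral map `F ↦ A`. -/
theorem curvature_map_bijective_fock_schwinger
    {n N : ℕ} (hn : 1 ≤ n) (g : ℝ) :
    Set.BijOn (curvMap (n := n) (N := N) g) (FockSchwingerSet n N) (BianchiSet n N g) ∧
    Set.InvOn radConn (curvMap g) (FockSchwingerSet n N) (BianchiSet n N g) := by
  have hmaps : Set.MapsTo (curvMap (n := n) (N := N) g) (FockSchwingerSet n N)
      (BianchiSet n N g) := by
    intro A hA
    have hAs : ∀ μ, FSSm fun x => A x μ := fun μ a b => hA.1 μ a b
    refine ⟨fun μ ν a b => curvMap_smooth g hAs μ ν a b, curvMap_antisymm g A, ?_⟩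
    intro x μ ν ρ
    rw [radConn_curvMap g hA]
    exact (bianchi_iff g A (curvMap g A) x μ ν ρ).1 (bianchi_curvMap g hAs x μ ν ρ)
  have hmaps' : Set.MapsTo (radConn (n := n) (N := N)) (BianchiSet n N g)
      (FockSchwingerSet n N) := fun F hF => radConn_mem (fun μ ν a b => hF.1 μ ν a b) hF.2.1
  have hinv : Set.InvOn radConn (curvMap g) (FockSchwingerSet n N) (BianchiSet n N g) :=
    ⟨fun A hA => radConn_curvMap g hA, fun F hF =>
      curvMap_radConn g (fun μ ν a b => hF.1 μ ν a b) hF.2.1 fun x μ ν ρ =>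
        (bianchi_iff g (radConn F) F x μ ν ρ).2 (hF.2.2 x μ ν ρ)⟩
  exact ⟨hinv.bijOn hmaps hmaps', hinv⟩
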